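/- Let X be a Tychonoff space with a countable π-base. Then C_h(X) is separable if and only if X has a countable π-network consisting of 𝓘-sets. -/

import Mathlib

open TopologicalSpace Set Topology

/-- The point-open topology `p` on `C(X, ℝ)`. -/
def pointOpenTopology (X : Type*) [TopologicalSpace X] : TopologicalSpace C(X, ℝ) :=
  generateFrom {S | ∃ (x : X) (U : Set ℝ), IsOpen U ∧ S = {f : C(X, ℝ) | f x ∈ U}}

/-- The open-point topology `h` on `C(X, ℝ)`. -/
def openPointTopology (X : Type*) [TopologicalSpace X] : TopologicalSpace C(X, ℝ) :=
  generateFrom {S | ∃ (V : Set X) (r : ℝ), IsOpen V ∧ S = {f : C(X, ℝ) | ∃ x ∈ V, f x = r}}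

/-- The bi-point-open topology `ph` on `C(X, ℝ)`: generated by both kinds of subbasic sets. -/
def biPointOpenTopology (X : Type*) [TopologicalSpace X] : TopologicalSpace C(X, ℝ) :=
  generateFrom
    ({S | ∃ (x : X) (U : Set ℝ), IsOpen U ∧ S = {f : C(X, ℝ) | f x ∈ U}} ∪
     {S | ∃ (V : Set X) (r : ℝ), IsOpen V ∧ S = {f : C(X, ℝ) | ∃ x ∈ V, f x = r}})

/-- The dispersion character: minimum cardinality of a nonempty open subset. -/
noncomputable def dispersionCharacter (X : Type*) [TopologicalSpace X] : Cardinal :=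
  sInf {c | ∃ U : Set X, IsOpen U ∧ U.Nonempty ∧ c = Cardinal.mk U}

/-- A π-network: a family of nonempty subsets such that every nonempty open set contains one. -/
def IsPiNetwork {X : Type*} [TopologicalSpace X] (γ : Set (Set X)) : Prop :=
  (∀ A ∈ γ, A.Nonempty) ∧ ∀ U : Set X, IsOpen U → U.Nonempty → ∃ A ∈ γ, A ⊆ U

/-- A π-base: a family of nonempty open subsets such that every nonempty open set contains one. -/
def IsPiBase {X : Type*} [TopologicalSpace X] (γ : Set (Set X)) : Prop :=
  (∀ A ∈ γ, IsOpen A ∧ A.Nonempty) ∧ ∀ U : Set X, IsOpen U → U.Nonempty → ∃ A ∈ γ, A ⊆ U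

/-- A network. -/
def IsNetwork {X : Type*} [TopologicalSpace X] (𝒩 : Set (Set X)) : Prop :=
  ∀ (x : X) (U : Set X), IsOpen U → x ∈ U → ∃ N ∈ 𝒩, x ∈ N ∧ N ⊆ U

/-- An 𝓘-set. -/
def IsISet {X : Type*} [TopologicalSpace X] (A : Set X) : Prop :=
  ∃ (f : X → ℝ) (a b : ℝ), Continuous f ∧ a < b ∧ Icc a b ⊆ f '' A

/-- A T₀-separating family. -/
def T0Separating {X : Type*} (γ : Set (Set X)) : Prop :=
  ∀ x y : X, x ≠ y → ∃ V ∈ γ, (x ∈ V ∧ y ∉ V) ∨ (y ∈ V ∧ x ∉ V)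

/-- A zero-set. -/
def IsZeroSet {X : Type*} [TopologicalSpace X] (Z : Set X) : Prop :=
  ∃ f : X → ℝ, Continuous f ∧ Z = f ⁻¹' {0}

/-- Separable submetrizable: admits a coarser separable metrizable topology. -/
def SeparableSubmetrizable (X : Type*) [t : TopologicalSpace X] : Prop :=
  ∃ t' : TopologicalSpace X, (∀ U : Set X, IsOpen[t'] U → IsOpen[t] U) ∧
    @SeparableSpace X t' ∧ @MetrizableSpace X t'

/-- Hypothesis (M). -/
def HypothesisM : Prop :=
  ∀ A : Set ℝ, Cardinal.mk A = Cardinal.continuum →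
    ∃ f : A → ℝ, Continuous f ∧ Set.range f = Icc (0 : ℝ) 1

/-- A continuous map from the line whose image contains the Hilbert cube. -/
lemma exists_line_onto_cube :
    ∃ G : ℕ → ℝ → ℝ, (∀ n, Continuous (G n)) ∧
      ∀ s : ℕ → ℝ, (∀ n, s n ∈ Icc (0 : ℝ) 1) → ∃ y : ℝ, ∀ n, G n y = s n := by
  letI : MetricSpace (ℕ → unitInterval) := metrizableSpaceMetric _
  obtain ⟨F, hF, hsurj⟩ := exists_nat_bool_continuous_surjective_of_compact (ℕ → unitInterval)
  have hex : ∀ n : ℕ, ∃ g : C(ℝ, ℝ), ∀ c : cantorSet,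
      g c = (F (cantorSetHomeomorphNatToBool c) n : ℝ) := by
    intro n
    let f : C(cantorSet, ℝ) := ⟨fun c => (F (cantorSetHomeomorphNatToBool c) n : ℝ),
      continuous_subtype_val.comp ((continuous_apply n).comp
        (hF.comp cantorSetHomeomorphNatToBool.continuous))⟩
    obtain ⟨g, hg⟩ := ContinuousMap.exists_extension
      (isClosed_cantorSet.isClosedEmbedding_subtypeVal) f
    exact ⟨g, fun c => DFunLike.congr_fun hg c⟩
  choose g hg using hex
  refine ⟨fun n => g n, fun n => (g n).continuous, fun s hs => ?_⟩
  obtain ⟨z, hz⟩ := hsurj (fun n => ⟨s n, hs n⟩)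
  refine ⟨(cantorSetHomeomorphNatToBool.symm z : cantorSet), fun n => ?_⟩
  change g n _ = s n
  rw [hg, Homeomorph.apply_symm_apply, hz]

/-- If countably many continuous images of `V` cover the line, then `V` is an 𝓘-set. -/
lemma isISet_of_cover {X : Type*} [TopologicalSpace X] {V : Set X} (f : ℕ → C(X, ℝ))
    (hf : ∀ r : ℝ, ∃ n, ∃ x ∈ V, f n x = r) : IsISet V := by
  obtain ⟨G, hG, hsurj⟩ := exists_line_onto_cube
  by_contra hV
  have hmiss : ∀ n, ∃ s ∈ Icc (0 : ℝ) 1, ∀ x ∈ V, G n (f n x) ≠ s := by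
    intro n
    by_contra! hcon
    exact hV ⟨fun x => G n (f n x), 0, 1, (hG n).comp (f n).continuous, one_pos,
      fun s hs => hcon s hs⟩
  choose s hs hs' using hmiss
  obtain ⟨y, hy⟩ := hsurj s hs
  obtain ⟨n, x, hx, hxy⟩ := hf y
  exact hs' n x hx (by rw [hxy, hy])

lemma exists_injOn_choice {X ι : Type*} (V : ι → Set X) (hV : ∀ i, (V i).Infinite)
    (s : Finset ι) : ∃ x : ι → X, (∀ i, x i ∈ V i) ∧ InjOn x s := by
  classical
  induction s using Finset.induction_on with
  | empty =>
    choose x hx using fun i => (hV i).nonempty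
    exact ⟨x, hx, by simp⟩
  | insert a s ha ih =>
    obtain ⟨x, hx, hinj⟩ := ih
    obtain ⟨y, hy, hys⟩ := (hV a).exists_notMem_finset (s.image x)
    refine ⟨Function.update x a y, ?_, ?_⟩
    · intro i
      by_cases h : i = a
      · subst h; simpa using hy
      · simpa [h] using hx i
    · have hne : ∀ i ∈ s, i ≠ a := fun i hi h => ha (h ▸ hi)
      rw [Finset.coe_insert, injOn_insert (by simpa using ha)]
      constructor
      · intro i hi j hj hij
        rw [Function.update_of_ne (hne i hi), Function.update_of_ne (hne j hj)] at hij
        exact hinj hi hj hij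
      · rintro ⟨i, hi, hiy⟩
        rw [Function.update_of_ne (hne i hi), Function.update_self] at hiy
        exact hys (Finset.mem_image.2 ⟨i, hi, hiy⟩)

lemma IsISet.infinite {X : Type*} [TopologicalSpace X] {A : Set X} (h : IsISet A) :
    A.Infinite := by
  obtain ⟨f, a, b, -, hab, hsub⟩ := h
  exact Infinite.of_image f ((Icc_infinite hab).mono hsub)

lemma IsISet.rescale {X : Type*} [TopologicalSpace X] {A : Set X} (h : IsISet A) (m : ℝ) :
    ∃ f : X → ℝ, Continuous f ∧ Icc (-m) m ⊆ f '' A := by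
  obtain ⟨f, a, b, hf, hab, hsub⟩ := h
  have hba : 0 < b - a := sub_pos.2 hab
  refine ⟨fun x => (f x - a) / (b - a) * (2 * m) - m, by fun_prop, ?_⟩
  intro r hr
  by_cases hm : 0 < m
  · obtain ⟨x, hx, hfx⟩ := hsub (show a + (r + m) / (2 * m) * (b - a) ∈ Icc a b by
      have h0 : 0 ≤ (r + m) / (2 * m) := div_nonneg (by linarith [hr.1]) (by linarith)
      have h1 : (r + m) / (2 * m) ≤ 1 := by
        rw [div_le_one (by linarith)]; linarith [hr.2]
      constructor <;> nlinarith)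
    refine ⟨x, hx, ?_⟩
    simp only [hfx]
    field_simp
    ring
  · obtain ⟨x, hx, -⟩ := hsub (left_mem_Icc.2 hab.le)
    have hm0 : m = 0 := by linarith [hr.1, hr.2]
    refine ⟨x, hx, ?_⟩
    have := hr.1
    have := hr.2
    subst hm0
    simp only [mul_zero, sub_zero]
    linarith

/-- A function which is onto `[-m,m]` on members of `γ` inside given infinite open sets. -/
lemma exists_good_fun {X : Type*} [TopologicalSpace X] [T35Space X] {γ : Set (Set X)}
    (hγ : IsPiNetwork γ) (hI : ∀ A ∈ γ, IsISet A) {ι : Type*} [Fintype ι]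
    (V : ι → Set X) (hV : ∀ i, IsOpen (V i)) (hne : ∀ i, (V i).Nonempty) (m : ℝ) :
    ∃ A : ι → γ, (∀ i, (A i : Set X) ⊆ V i) ∧
      ∃ g : C(X, ℝ), ∀ i, Icc (-m) m ⊆ g '' (A i : Set X) := by
  classical
  have hinf : ∀ i, (V i).Infinite := fun i => by
    obtain ⟨A, hA, hAV⟩ := hγ.2 _ (hV i) (hne i)
    exact (hI A hA).infinite.mono hAV
  obtain ⟨x, hx, hinj⟩ := exists_injOn_choice V hinf Finset.univ
  have hinj' : Function.Injective x := fun i j h => hinj (by simp) (by simp) h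
  obtain ⟨U, hU, hdisj⟩ := (finite_range x).t2_separation
  have hcut : ∀ i, ∃ φ : X → unitInterval, Continuous φ ∧ φ (x i) = 0 ∧
      EqOn φ 1 (V i ∩ U (x i))ᶜ := fun i =>
    CompletelyRegularSpace.completely_regular_isOpen (x i) _ ((hV i).inter (hU _).2)
      ⟨hx i, (hU _).1⟩
  choose φ hφ hφ0 hφ1 using hcut
  have hA : ∀ i, ∃ A ∈ γ, A ⊆ {y | (φ i y : ℝ) < 1 / 2} := fun i =>
    hγ.2 _ (isOpen_lt (continuous_subtype_val.comp (hφ i)) continuous_const)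
      ⟨x i, by simp [hφ0]⟩
  choose A hAγ hAsub using hA
  have hAin : ∀ i, ∀ y ∈ A i, y ∈ V i ∩ U (x i) := by
    intro i y hy
    by_contra hcon
    have h1 := hφ1 i hcon
    have h2 : (φ i y : ℝ) < 1 / 2 := hAsub i hy
    rw [h1] at h2
    norm_num at h2
  choose f hf hfA using fun i => (hI (A i) (hAγ i)).rescale m
  refine ⟨fun i => ⟨A i, hAγ i⟩, fun i y hy => (hAin i y hy).1, ?_⟩
  let g : X → ℝ := fun y => ∑ i, min 1 (2 * (1 - (φ i y : ℝ))) * f i y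
  have hg : Continuous g := by
    refine continuous_finsetSum _ fun i _ => ?_
    have := hf i
    have := continuous_subtype_val.comp (hφ i)
    simp only [Function.comp_def] at this
    fun_prop
  refine ⟨⟨g, hg⟩, fun i r hr => ?_⟩
  obtain ⟨y, hy, hyr⟩ := hfA i hr
  refine ⟨y, hy, ?_⟩
  change g y = r
  rw [← hyr]
  have h2 : (φ i y : ℝ) < 1 / 2 := hAsub i hy
  have : g y = min 1 (2 * (1 - (φ i y : ℝ))) * f i y := by
    refine Finset.sum_eq_single i (fun j _ hj => ?_) (by simp)
    have hyj : y ∈ (V j ∩ U (x j))ᶜ := by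
      intro hcon
      have hd := hdisj (mem_range_self i) (mem_range_self j) (fun h => hj (hinj' h).symm)
      exact disjoint_left.1 hd (hAin i y hy).2 hcon.2
    rw [hφ1 j hyj]
    simp
  rw [this, min_eq_left (by linarith), one_mul]

/-- For a Tychonoff space with a countable π-base, `C_h(X)` is separable iff
`X` has a countable π-network of 𝓘-sets. -/
theorem stmt17 {X : Type*} [TopologicalSpace X] [T35Space X]
    (hβ : ∃ β : Set (Set X), β.Countable ∧ IsPiBase β) :
    @SeparableSpace C(X, ℝ) (openPointTopology X) ↔
      ∃ γ : Set (Set X), γ.Countable ∧ IsPiNetwork γ ∧ ∀ A ∈ γ, IsISet A := by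
  constructor
  · intro hsep
    obtain ⟨β, hβc, hβ⟩ := hβ
    refine ⟨β, hβc, ⟨fun A hA => (hβ.1 A hA).2, hβ.2⟩, fun V hV => ?_⟩
    obtain ⟨hVo, x, hx⟩ := hβ.1 V hV
    letI := openPointTopology X
    haveI : Nonempty C(X, ℝ) := ⟨0⟩
    refine isISet_of_cover (denseSeq C(X, ℝ)) fun r => ?_
    have hopen : IsOpen {f : C(X, ℝ) | ∃ x ∈ V, f x = r} :=
      isOpen_generateFrom_of_mem ⟨V, r, hVo, rfl⟩
    obtain ⟨_, hf, n, rfl⟩ := (denseRange_denseSeq C(X, ℝ)).inter_open_nonempty _ hopen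
      ⟨ContinuousMap.const X r, x, hx, rfl⟩
    exact ⟨n, hf⟩
  · rintro ⟨γ, hγc, hγ, hI⟩
    classical
    haveI : Countable γ := hγc.to_subtype
    let P : Finset γ × ℕ → C(X, ℝ) → Prop := fun t g =>
      ∀ A ∈ t.1, Icc (-(t.2 : ℝ)) t.2 ⊆ g '' (A : Set X)
    let d : Finset γ × ℕ → C(X, ℝ) := fun t => Classical.epsilon (P t)
    letI := openPointTopology X
    refine ⟨range d, countable_range d, ?_⟩
    rw [(isTopologicalBasis_of_subbasis (t := openPointTopology X) rfl).dense_iff]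
    rintro _ ⟨F, ⟨hFfin, hF⟩, rfl⟩ ⟨g₀, hg₀⟩
    haveI : Fintype F := hFfin.fintype
    choose V r hVo hVr using fun S : F => hF S.2
    have hne : ∀ S, (V S).Nonempty := fun S => by
      have h := hg₀ S.1 S.2
      rw [hVr S] at h
      obtain ⟨x, hx, -⟩ := h
      exact ⟨x, hx⟩
    obtain ⟨m, hm⟩ := exists_nat_ge (∑ S, |r S|)
    obtain ⟨A, hAV, g, hg⟩ := exists_good_fun hγ hI V hVo hne m
    have hP : P (Finset.univ.image A, m) (d (Finset.univ.image A, m)) := by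
      refine Classical.epsilon_spec (p := P (Finset.univ.image A, m)) ⟨g, fun B hB => ?_⟩
      obtain ⟨S, -, rfl⟩ := Finset.mem_image.1 hB
      exact hg S
    refine ⟨d (Finset.univ.image A, m), ?_, mem_range_self _⟩
    intro S hS
    have hr : |r ⟨S, hS⟩| ≤ m :=
      (Finset.single_le_sum (f := fun S => |r S|) (fun _ _ => abs_nonneg _)
        (Finset.mem_univ _)).trans hm
    obtain ⟨x, hx, hxr⟩ := hP (A ⟨S, hS⟩) (Finset.mem_image_of_mem _ (Finset.mem_univ _))
      (abs_le.1 hr)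
    have := hVr ⟨S, hS⟩
    simp only at this
    rw [this]
    exact ⟨x, hAV _ hx, hxr⟩
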